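/- Let k ∈ ℕ. If a graph G contains no (≥4k+1)-subdivision of the triangle K³ as a geodesic subgraph and no (≥3k)-subdivision of the claw K_{1,3} as a 3-quasi-geodesic subgraph, then G has radial path-width at most 18k + 2. -/

import Mathlib

open SimpleGraph

namespace RadialPaper

variable {V W N : Type*}

/-- The ball of radius `r` around a set `U` of vertices of `G`. -/
def ballSet (G : SimpleGraph V) (U : Set V) (r : ℕ) : Set V :=
  {v | ∃ u ∈ U, G.edist u v ≤ (r : ℕ∞)}

/-- `G` has radius at most `r`: some vertex has distance at most `r` from every vertex.
The empty graph has radius `0`; a nonempty disconnected graph has radius `∞`, hence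
satisfies `radiusLE` for no `r`. -/
def radiusLE (G : SimpleGraph V) (r : ℕ) : Prop :=
  Nonempty V → ∃ v : V, ∀ w : V, G.edist v w ≤ (r : ℕ∞)

/-- `(Hg, B)` is a graph-decomposition of `G` modelled on `Hg`. -/
def IsGraphDecomp (G : SimpleGraph V) (Hg : SimpleGraph N) (B : N → Set V) : Prop :=
  (∀ v : V, ∃ h : N, v ∈ B h) ∧
  (∀ ⦃u v : V⦄, G.Adj u v → ∃ h : N, u ∈ B h ∧ v ∈ B h) ∧
  (∀ v : V, (Hg.induce {h : N | v ∈ B h}).Connected)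

/-- A subgraph `X` of `G` is `c`-quasi-geodesic. -/
def IsQuasiGeodesic (G : SimpleGraph V) (X : G.Subgraph) (c : ℕ) : Prop :=
  ∀ u v : X.verts, X.coe.edist u v ≤ (c : ℕ∞) * G.edist (u : V) (v : V)

/-- The subgraph `Y` of `G` is a `(≥ k)`-subdivision of the graph `X`. -/
def IsSubdivGE (k : ℕ) (X : SimpleGraph W) {G : SimpleGraph V} (Y : G.Subgraph) : Prop :=
  ∃ (f : W → V) (p : ∀ ⦃u v : W⦄, X.Adj u v → G.Walk (f u) (f v)),
    Function.Injective f ∧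
    (∀ ⦃u v : W⦄ (h : X.Adj u v), (p h).IsPath) ∧
    (∀ ⦃u v : W⦄ (h : X.Adj u v), k + 1 ≤ (p h).length) ∧
    (∀ ⦃u v : W⦄ (h : X.Adj u v), p h.symm = (p h).reverse) ∧
    (∀ ⦃u v : W⦄ (h : X.Adj u v) (w : W), f w ∈ (p h).support → w = u ∨ w = v) ∧
    (∀ ⦃u v u' v' : W⦄ (h : X.Adj u v) (h' : X.Adj u' v'), s(u, v) ≠ s(u', v') →
      ∀ x : V, x ∈ (p h).support → x ∈ (p h').support →
        (x = f u ∨ x = f v) ∧ (x = f u' ∨ x = f v')) ∧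
    Y.verts = Set.range f ∪ {x : V | ∃ (u v : W) (h : X.Adj u v), x ∈ (p h).support} ∧
    Y.edgeSet = {e : Sym2 V | ∃ (u v : W) (h : X.Adj u v), e ∈ (p h).edges}

/-- `G` contains a `(≥ k)`-subdivision of `X` as a `c`-quasi-geodesic subgraph. -/
def ContainsQuasiGeodesicSubdivGE (G : SimpleGraph V) (k : ℕ) (X : SimpleGraph W) (c : ℕ) :
    Prop :=
  ∃ Y : G.Subgraph, IsSubdivGE k X Y ∧ IsQuasiGeodesic G Y c

/-- `X` is a minor of `Hg`. -/
def IsMinorOf (X : SimpleGraph W) (Hg : SimpleGraph N) : Prop :=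
  ∃ B : W → Set N, (∀ w, (B w).Nonempty) ∧ (∀ w, (Hg.induce (B w)).Connected) ∧
    (∀ ⦃w w' : W⦄, w ≠ w' → Disjoint (B w) (B w')) ∧
    (∀ ⦃w w' : W⦄, X.Adj w w' → ∃ a ∈ B w, ∃ b ∈ B w', Hg.Adj a b)

/-- A class of (finite) graphs, given on the canonical vertex sets `Fin n`, is minor-closed. -/
def MinorClosed (ℋ : ∀ n : ℕ, SimpleGraph (Fin n) → Prop) : Prop :=
  ∀ ⦃m n : ℕ⦄ (X : SimpleGraph (Fin m)) (Hg : SimpleGraph (Fin n)),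
    ℋ n Hg → IsMinorOf X Hg → ℋ m X

/-- The triangle `K³`. -/
def triangleGraph : SimpleGraph (Fin 3) := ⊤

/-- The claw `K_{1,3}`, with centre `0`. -/
def clawGraph : SimpleGraph (Fin 4) := SimpleGraph.fromRel (fun a _ => a = 0)

/-- The wrench graph: two adjacent vertices `0, 1` of degree three, with leaves `2,3` and
`4,5` respectively. -/
def wrenchGraph : SimpleGraph (Fin 6) :=
  SimpleGraph.fromRel (fun a b =>
    (a = 0 ∧ b = 1) ∨ (a = 0 ∧ b = 2) ∨ (a = 0 ∧ b = 3) ∨ (a = 1 ∧ b = 4) ∨ (a = 1 ∧ b = 5))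

/-- The star `K_{1,m}`, with centre `none`. -/
def starGraph (m : ℕ) : SimpleGraph (Option (Fin m)) :=
  SimpleGraph.fromRel (fun a _ => a = none)

/-- `Hg` is a disjoint union of paths: every connected component is a path. -/
def IsUnionOfPaths (Hg : SimpleGraph N) : Prop :=
  ∀ cc : Hg.ConnectedComponent, ∃ m : ℕ,
    Nonempty (Hg.induce cc.supp ≃g SimpleGraph.pathGraph m)

/-- `Hg` is a disjoint union of cycles: every connected component is a cycle. -/
def IsUnionOfCycles (Hg : SimpleGraph N) : Prop :=
  ∀ cc : Hg.ConnectedComponent, ∃ m : ℕ, 3 ≤ m ∧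
    Nonempty (Hg.induce cc.supp ≃g SimpleGraph.cycleGraph m)

/-- `Hg` is a subdivided star, i.e. a `(≥ 0)`-subdivision of some star `K_{1,m}`. -/
def IsSubdividedStar (Hg : SimpleGraph N) : Prop :=
  ∃ m : ℕ, IsSubdivGE 0 (starGraph m) (⊤ : Hg.Subgraph)

/-- `Hg` is a disjoint union of subdivided stars. -/
def IsUnionOfSubdividedStars (Hg : SimpleGraph N) : Prop :=
  ∀ cc : Hg.ConnectedComponent, IsSubdividedStar (Hg.induce cc.supp)

/-- A graph-decomposition is honest: bags of adjacent nodes intersect. -/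
def Honest (Hg : SimpleGraph N) (B : N → Set V) : Prop :=
  ∀ ⦃h h' : N⦄, Hg.Adj h h' → (B h ∩ B h').Nonempty

/-- The outer-radial width of a decomposition of `G` is at most `r`. -/
def OuterRadialWidthLE (G : SimpleGraph V) (B : N → Set V) (r : ℕ) : Prop :=
  ∀ h : N, ∃ z : V, ∀ v ∈ B h, G.edist z v ≤ (r : ℕ∞)

/-- The radial spread of a decomposition `(Hg, B)` of a graph with vertex set `V`
is at most `r`. -/
def RadialSpreadLE (Hg : SimpleGraph N) (B : N → Set V) (r : ℕ) : Prop :=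
  ∀ v : V, radiusLE (Hg.induce {h : N | v ∈ B h}) r

/-- `φ` is an `(m, a, M, A, r)`-quasi-isometry from `Hg` to `G`. -/
def IsQuasiIsometry (Hg : SimpleGraph N) (G : SimpleGraph V) (m a M A r : ℕ)
    (φ : N → V) : Prop :=
  (∀ h h' : N, Hg.edist h h' ≤ (m : ℕ∞) * G.edist (φ h) (φ h') + (a : ℕ∞)) ∧
  (∀ h h' : N, G.edist (φ h) (φ h') ≤ (M : ℕ∞) * Hg.edist h h' + (A : ℕ∞)) ∧
  (∀ v : V, ∃ h : N, G.edist v (φ h) ≤ (r : ℕ∞))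

/-- `C` is a connected component of `G - S`: a maximal connected set of vertices
disjoint from `S`. -/
def IsCompOf (G : SimpleGraph V) (C S : Set V) : Prop :=
  C.Nonempty ∧ Disjoint C S ∧ (G.induce C).Connected ∧
  ∀ D : Set V, C ⊆ D → Disjoint D S → (G.induce D).Connected → D = C

/-- The subgraph `P` of `G` is an `M₀`–`M₁` path meeting `C`. -/
def IsM01Path (G : SimpleGraph V) (M₀ M₁ C : Set V) (P : G.Subgraph) : Prop :=
  ∃ (x y : V) (q : G.Walk x y), q.IsPath ∧ q.toSubgraph = P ∧ x ∈ M₀ ∧ y ∈ M₁ ∧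
    (∀ z ∈ q.support, z ≠ x → z ≠ y → z ∉ M₀ ∪ M₁) ∧ ∃ z ∈ q.support, z ∈ C

/-- The number of `M₀`–`M₁` paths meeting `C` that are contained in the subgraph `OS`. -/
noncomputable def Wcount (G : SimpleGraph V) (M₀ M₁ C : Set V) (OS : G.Subgraph) : ℕ :=
  Set.ncard {P : G.Subgraph | P ≤ OS ∧ IsM01Path G M₀ M₁ C P}

/-!
Suppose `G` is connected, and let `P` be a longest geodesic of `G`. If `P` is short then `G`
itself is a suitable bag. Otherwise send every vertex to a nearest vertex of `P`. A vertex far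
from `P` that projected to the middle of `P` would yield a claw with two legs along `P`, so the
regions far from `P` are attached near the ends of `P` only. If an edge far from `P` joined the
regions at the two ends of `P`, then it would close up through `P` to a closed walk which uses
such edges a nonzero number of times, counted with sign. A shortest closed walk of this kind is a
geodesic cycle, and it is long because it has to travel along `P`, so it is a subdivided triangle.
Hence there is no such edge, and a vertex projecting near one end cannot be too deep: its geodesic
to the opposite end of `P` has to return to `P` first, but is no longer than `P`. With all depths
bounded, the preimages of the windows of `P` are the bags of a decomposition modelled on a path.
The components of a disconnected graph are laid out one after the other.
-/

section Walks

variable {G : SimpleGraph V} {u v x y : V}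

lemma toSubgraph_le_of_isSubwalk {p : G.Walk u v} {q : G.Walk x y} (h : q.IsSubwalk p) :
    q.toSubgraph ≤ p.toSubgraph := by
  obtain ⟨r₁, r₂, rfl⟩ := h
  rw [Walk.toSubgraph_append, Walk.toSubgraph_append]
  exact le_sup_right.trans le_sup_left

lemma exists_isSubwalk_getVert_getVert (w : G.Walk u v) {s t : ℕ} (hst : s ≤ t)
    (ht : t ≤ w.length) :
    ∃ q : G.Walk (w.getVert s) (w.getVert t), q.IsSubwalk w ∧ q.length = t - s ∧
      ∀ i ≤ t - s, q.getVert i = w.getVert (s + i) := by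
  obtain ⟨d, rfl⟩ := Nat.exists_eq_add_of_le hst
  rw [← Walk.drop_getVert]
  refine ⟨(w.drop s).take d, (Walk.isSubwalk_take _ _).trans (Walk.isSubwalk_drop w s), ?_,
    fun i hi => ?_⟩
  · rw [Walk.take_length, Walk.drop_length]
    omega
  · rw [Walk.take_getVert, Walk.drop_getVert, min_eq_right (by omega)]

lemma dist_getVert_getVert_le (w : G.Walk u v) {s t : ℕ} (hst : s ≤ t) (ht : t ≤ w.length) :
    G.dist (w.getVert s) (w.getVert t) ≤ t - s := by
  obtain ⟨q, -, hq, -⟩ := exists_isSubwalk_getVert_getVert w hst ht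
  exact hq ▸ dist_le q

lemma dist_add_dist_add_dist_le_length (w : G.Walk u v) (hx : x ∈ w.support)
    (hy : y ∈ w.support) :
    G.dist u x + G.dist x y + G.dist y v ≤ w.length ∨
      G.dist u y + G.dist x y + G.dist x v ≤ w.length := by
  have ordered {s t : ℕ} (hst : s ≤ t) (ht : t ≤ w.length) :
      G.dist u (w.getVert s) + G.dist (w.getVert s) (w.getVert t) + G.dist (w.getVert t) v
        ≤ w.length := by
    have hus := dist_getVert_getVert_le w (Nat.zero_le s) (hst.trans ht)
    have hst' := dist_getVert_getVert_le w hst ht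
    have htv := dist_getVert_getVert_le w ht le_rfl
    rw [Walk.getVert_zero] at hus
    rw [Walk.getVert_length] at htv
    omega
  obtain ⟨s, rfl, hs⟩ := Walk.mem_support_iff_exists_getVert.1 hx
  obtain ⟨t, rfl, ht⟩ := Walk.mem_support_iff_exists_getVert.1 hy
  rcases le_total s t with hst | hts
  · exact .inl (ordered hst ht)
  · rw [dist_comm (u := w.getVert s) (v := w.getVert t)]
    exact .inr (ordered hts hs)

/-- A geodesic: a walk that is a shortest one between its ends. -/
def IsGeodesic (w : G.Walk u v) : Prop :=
  w.length = G.dist u v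

lemma IsGeodesic.reverse {w : G.Walk u v} (hw : IsGeodesic w) : IsGeodesic w.reverse := by
  rw [IsGeodesic, Walk.length_reverse, dist_comm]
  exact hw

lemma IsGeodesic.dist_getVert_getVert {w : G.Walk u v} (hw : IsGeodesic w) {s t : ℕ}
    (hst : s ≤ t) (ht : t ≤ w.length) : G.dist (w.getVert s) (w.getVert t) = t - s := by
  obtain ⟨q, hqw, hq, -⟩ := exists_isSubwalk_getVert_getVert w hst ht
  rw [← hq, length_eq_dist_of_subwalk hw hqw]

end Walks

section Weight

variable {G : SimpleGraph V} {A : Type*} {u v x : V}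

/-- The sum of the values of `wt` along the darts of a walk. With `wt` antisymmetric, a closed walk
of nonzero weight winds around the graph. -/
def weight [AddMonoid A] (wt : V → V → A) (w : G.Walk u v) : A :=
  (w.darts.map fun d => wt d.fst d.snd).sum

lemma weight_append [AddMonoid A] (wt : V → V → A) (p : G.Walk u v) (q : G.Walk v x) :
    weight wt (p.append q) = weight wt p + weight wt q := by
  simp [weight]

lemma weight_toWalk [AddMonoid A] (wt : V → V → A) (h : G.Adj u v) :
    weight wt h.toWalk = wt u v := by
  simp [weight]

lemma exists_mem_darts_ne_zero [AddMonoid A] {wt : V → V → A} {w : G.Walk u v}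
    (hw : weight wt w ≠ 0) : ∃ d ∈ w.darts, wt d.fst d.snd ≠ 0 := by
  contrapose! hw
  exact List.sum_eq_zero (by simpa using hw)

variable [AddCommGroup A] {wt : V → V → A}

lemma weight_reverse (hwt : ∀ u v, wt v u = -wt u v) (w : G.Walk u v) :
    weight wt w.reverse = -weight wt w := by
  induction w with
  | nil => simp [weight]
  | @cons u v x h w ih =>
    have hsplit : (Walk.cons h w).reverse = w.reverse.append h.symm.toWalk :=
      Walk.reverse_cons h w
    change _ = -weight wt (h.toWalk.append w)
    rw [hsplit, weight_append, weight_append, ih, weight_toWalk, weight_toWalk, hwt u v,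
      neg_add_rev]

lemma weight_eq_sub {φ : V → A} (w : G.Walk u v)
    (h : ∀ d ∈ w.darts, wt d.fst d.snd = φ d.snd - φ d.fst) : weight wt w = φ v - φ u := by
  induction w with
  | nil => simp [weight]
  | @cons u v x huv w ih =>
    change weight wt (huv.toWalk.append w) = _
    rw [Walk.darts_cons, List.forall_mem_cons] at h
    rw [weight_append, weight_toWalk, h.1, ih h.2, add_comm, sub_add_sub_cancel]

/-- A closed walk along which the distances in `G` are those of the cycle of the same length, so
that it traverses an isometric cycle of `G`. -/
def IsGeodesicClosed (w : G.Walk u u) : Prop :=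
  ∀ ⦃i j⦄, i ≤ j → j ≤ w.length →
    min (j - i) (w.length - (j - i)) ≤ G.dist (w.getVert i) (w.getVert j)

lemma isGeodesicClosed_of_forall_length_le (hG : G.Connected) (hwt : ∀ u v, wt v u = -wt u v)
    {w : G.Walk u u} (hw : weight wt w ≠ 0)
    (hmin : ∀ ⦃x⦄ (q : G.Walk x x), weight wt q ≠ 0 → w.length ≤ q.length) :
    IsGeodesicClosed w := by
  intro i j hij hj
  by_contra! hlt
  have weight_eq_zero {x} (q : G.Walk x x) (hq : q.length < w.length) : weight wt q = 0 := by
    by_contra h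
    exact hq.not_ge (hmin q h)
  obtain ⟨mid, ⟨pre, post, hsplit⟩, hmid, -⟩ := exists_isSubwalk_getVert_getVert w hij hj
  obtain ⟨short, hshort⟩ := hG.exists_walk_length_eq_dist (w.getVert i) (w.getVert j)
  have hlen : w.length = pre.length + mid.length + post.length := by
    conv_lhs => rw [hsplit]
    rw [Walk.length_append, Walk.length_append]
  have hback := weight_eq_zero (short.append mid.reverse)
    (by rw [Walk.length_append, Walk.length_reverse]; omega)
  have hdetour := weight_eq_zero ((pre.append short).append post)
    (by rw [Walk.length_append, Walk.length_append]; omega)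
  rw [weight_append, weight_reverse hwt, ← sub_eq_add_neg, sub_eq_zero] at hback
  rw [weight_append, weight_append, hback] at hdetour
  rw [hsplit, weight_append, weight_append] at hw
  exact hw hdetour

lemma exists_isGeodesicClosed_cons (hG : G.Connected) (hwt : ∀ u v, wt v u = -wt u v)
    (w : G.Walk u u) (hw : weight wt w ≠ 0) :
    ∃ (x y : V) (h : G.Adj x y) (q : G.Walk y x), wt x y ≠ 0 ∧
      weight wt (.cons h q) ≠ 0 ∧ IsGeodesicClosed (.cons h q) := by
  classical
  have hlen : ∃ n, ∃ (x : V) (q : G.Walk x x), weight wt q ≠ 0 ∧ q.length = n :=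
    ⟨_, u, w, hw, rfl⟩
  obtain ⟨x, q, hq, hqlen⟩ := Nat.find_spec hlen
  obtain ⟨d, hd, hd0⟩ := exists_mem_darts_ne_zero hq
  obtain ⟨p, r, rfl⟩ := (Walk.isSubwalk_toWalk_adj_iff_mem_darts q).2 hd
  have hrot : weight wt (d.adj.toWalk.append (r.append p)) ≠ 0 := by
    rw [weight_append, weight_append] at hq ⊢
    rwa [← add_assoc, add_comm, ← add_assoc]
  refine ⟨d.fst, d.snd, d.adj, r.append p, hd0, hrot,
    isGeodesicClosed_of_forall_length_le hG hwt hrot fun z s hs => ?_⟩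
  have hs_len := Nat.find_min' hlen ⟨z, s, hs, rfl⟩
  rw [← hqlen] at hs_len
  simp only [Walk.length_append, Walk.length_cons, Walk.length_nil] at hs_len ⊢
  omega

end Weight

section Subdivision

variable {G : SimpleGraph V} {X : SimpleGraph W} {ι : Type*} {s t : ι → W} {f : W → V} {k : ℕ}

lemma exists_walks_symm_eq_reverse {R : ∀ ⦃u v⦄, G.Walk (f u) (f v) → Prop}
    (hrev : ∀ ⦃u v⦄ (w : G.Walk (f u) (f v)), R w → R w.reverse)
    (hR : ∀ ⦃u v⦄, X.Adj u v → ∃ w : G.Walk (f u) (f v), R w) :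
    ∃ p : ∀ ⦃u v⦄, X.Adj u v → G.Walk (f u) (f v),
      (∀ ⦃u v⦄ (h : X.Adj u v), R (p h)) ∧
        ∀ ⦃u v⦄ (h : X.Adj u v), p h.symm = (p h).reverse := by
  classical
  let _ : LinearOrder W := linearOrderOfSTO WellOrderingRel
  choose w hw using hR
  refine ⟨fun u v h => if u < v then w h else (w h.symm).reverse, fun u v h => ?_, fun u v h => ?_⟩
  · dsimp only
    split_ifs
    exacts [hw h, hrev _ (hw h.symm)]
  · rcases h.ne.lt_or_gt with huv | hvu
    · simp only [if_pos huv, if_neg huv.not_gt]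
    · simp only [if_pos hvu, if_neg hvu.not_gt, Walk.reverse_reverse]

lemma exists_walks_edge (q : ∀ i, G.Walk (f (s i)) (f (t i))) (hq : ∀ i, (q i).IsPath)
    (hX : ∀ u v, X.Adj u v → ∃ i, s(s i, t i) = s(u, v)) :
    ∃ p : ∀ ⦃u v⦄, X.Adj u v → G.Walk (f u) (f v),
      (∀ ⦃u v⦄ (h : X.Adj u v), p h.symm = (p h).reverse) ∧
        ∀ ⦃u v⦄ (h : X.Adj u v), ∃ i, s(s i, t i) = s(u, v) ∧ (p h).IsPath ∧
          (p h).length = (q i).length ∧ (p h).toSubgraph = (q i).toSubgraph := by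
  obtain ⟨p, hp, hsymm⟩ := exists_walks_symm_eq_reverse (X := X)
    (R := fun u v (w : G.Walk (f u) (f v)) => ∃ i, s(s i, t i) = s(u, v) ∧ w.IsPath ∧
      w.length = (q i).length ∧ w.toSubgraph = (q i).toSubgraph)
    (fun u v w ⟨i, hi, hw, hlen, hsub⟩ => ⟨i, hi.trans Sym2.eq_swap, hw.reverse,
      w.length_reverse.trans hlen, w.toSubgraph_reverse.trans hsub⟩)
    (fun u v h => by
      obtain ⟨i, hi⟩ := hX u v h
      rcases Sym2.eq_iff.1 hi with ⟨rfl, rfl⟩ | ⟨rfl, rfl⟩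
      · exact ⟨q i, i, rfl, hq i, rfl, rfl⟩
      · exact ⟨(q i).reverse, i, Sym2.eq_swap, (hq i).reverse, (q i).length_reverse,
          (q i).toSubgraph_reverse⟩)
  exact ⟨p, hsymm, hp⟩

lemma isSubdivGE_iSup_toSubgraph (q : ∀ i, G.Walk (f (s i)) (f (t i)))
    (hX : ∀ u v, X.Adj u v ↔ ∃ i, s(s i, t i) = s(u, v))
    (hinj : Function.Injective fun i => s(s i, t i)) (hcover : ∀ w, ∃ i, w = s i ∨ w = t i)
    (hf : Function.Injective f) (hpath : ∀ i, (q i).IsPath) (hlen : ∀ i, k + 1 ≤ (q i).length)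
    (hbranch : ∀ i w, f w ∈ (q i).support → w = s i ∨ w = t i)
    (hdisj : ∀ i j, i ≠ j → ∀ x ∈ (q i).support, x ∈ (q j).support → x ∈ Set.range f) :
    IsSubdivGE k X (⨆ i, (q i).toSubgraph) := by
  obtain ⟨p, hsymm, hp⟩ := exists_walks_edge q hpath fun u v h => (hX u v).1 h
  choose i hends hpath' hlen' hsub using hp
  have hsupp {u v} (h : X.Adj u v) (x : V) : x ∈ (p h).support ↔ x ∈ (q (i h)).support := by
    rw [← Walk.mem_verts_toSubgraph, hsub, Walk.mem_verts_toSubgraph]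
  have hbranch' {u v} (h : X.Adj u v) (w : W) (hw : f w ∈ (p h).support) : w = u ∨ w = v := by
    rw [← Sym2.mem_iff, ← hends h, Sym2.mem_iff]
    exact hbranch _ _ ((hsupp h _).1 hw)
  have htraverse (j : ι) : ∃ (u v : W) (h : X.Adj u v), (p h).toSubgraph = (q j).toSubgraph := by
    have h : X.Adj (s j) (t j) := (hX _ _).2 ⟨j, rfl⟩
    exact ⟨_, _, h, by rw [hsub, hinj (hends h)]⟩
  refine ⟨f, p, hf, hpath', fun u v h => hlen' h ▸ hlen _, hsymm, @hbranch', ?_, ?_, ?_⟩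
  · intro u v u' v' h h' hne x hx hx'
    obtain ⟨w, rfl⟩ := hdisj (i h) (i h') (fun hi => hne (by rw [← hends h, hi, hends])) x
      ((hsupp h x).1 hx) ((hsupp h' x).1 hx')
    exact ⟨(hbranch' h w hx).imp (congrArg f) (congrArg f),
      (hbranch' h' w hx').imp (congrArg f) (congrArg f)⟩
  · ext x
    simp only [Subgraph.verts_iSup, Set.mem_iUnion, Walk.mem_verts_toSubgraph, Set.mem_union,
      Set.mem_range, Set.mem_ofPred_eq, hsupp]
    constructor
    · rintro ⟨j, hx⟩
      obtain ⟨u, v, h, hj⟩ := htraverse j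
      rw [← Walk.mem_verts_toSubgraph, ← hj, hsub, Walk.mem_verts_toSubgraph] at hx
      exact .inr ⟨u, v, h, hx⟩
    · rintro (⟨w, rfl⟩ | ⟨u, v, h, hx⟩)
      · obtain ⟨j, rfl | rfl⟩ := hcover w
        exacts [⟨j, (q j).start_mem_support⟩, ⟨j, (q j).end_mem_support⟩]
      · exact ⟨_, hx⟩
  · ext e
    simp only [Subgraph.edgeSet_iSup, Set.mem_iUnion, Set.mem_ofPred_eq,
      ← Walk.mem_edges_toSubgraph]
    constructor
    · rintro ⟨j, he⟩
      obtain ⟨u, v, h, hj⟩ := htraverse j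
      exact ⟨u, v, h, hj ▸ he⟩
    · rintro ⟨u, v, h, he⟩
      exact ⟨i h, hsub h ▸ he⟩

end Subdivision

section QuasiGeodesic

variable {G : SimpleGraph V} {X : SimpleGraph W} {k c : ℕ}

lemma edist_map_le {H : SimpleGraph N} (φ : G →g H) (u v : V) :
    H.edist (φ u) (φ v) ≤ G.edist u v := by
  refine le_iInf fun w => ?_
  rw [← Walk.length_map φ w]
  exact edist_le _

lemma edist_coe_le_length {Y : G.Subgraph} {u v : Y.verts} (w : G.Walk u v)
    (hw : w.toSubgraph ≤ Y) : Y.coe.edist u v ≤ w.length := by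
  have hlen := congrArg Walk.length w.map_mapToSubgraph_hom
  rw [Walk.length_map] at hlen
  exact ((edist_map_le (Subgraph.inclusion hw) _ _).trans (edist_le w.mapToSubgraph)).trans_eq
    (congrArg Nat.cast hlen)

lemma isQuasiGeodesic_of_exists_walk {Y : G.Subgraph}
    (h : ∀ u ∈ Y.verts, ∀ v ∈ Y.verts,
      ∃ w : G.Walk u v, w.toSubgraph ≤ Y ∧ w.length ≤ c * G.dist u v) :
    IsQuasiGeodesic G Y c := by
  intro u v
  obtain ⟨w, hwY, hw⟩ := h u u.2 v v.2
  rw [← w.reachable.coe_dist_eq_edist]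
  exact (edist_coe_le_length w hwY).trans (mod_cast hw)

lemma IsSubdivGE.map {H : SimpleGraph N} {Y : H.Subgraph} (hY : IsSubdivGE k X Y) (φ : H ↪g G) :
    IsSubdivGE k X (Y.map φ.toHom) := by
  obtain ⟨f, p, hf, hpath, hlen, hsymm, hbranch, hdisj, hverts, hedges⟩ := hY
  have hsupp {u v} (h : X.Adj u v) (x : V) :
      x ∈ ((p h).map φ.toHom).support ↔ ∃ y ∈ (p h).support, φ y = x := by
    rw [Walk.support_map, List.mem_map]
    rfl
  refine ⟨φ ∘ f, fun u v h => (p h).map φ.toHom, φ.injective.comp hf,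
    fun u v h => (hpath h).map φ.injective,
    fun u v h => (hlen h).trans_eq (Walk.length_map _ _).symm, fun u v h => ?_,
    fun u v h w hw => ?_, fun u v u' v' h h' hne x hx hx' => ?_, ?_, ?_⟩
  · dsimp only
    rw [hsymm, Walk.reverse_map]
  · obtain ⟨y, hy, hyw⟩ := (hsupp h _).1 hw
    exact hbranch h w (φ.injective hyw ▸ hy)
  · obtain ⟨y, hy, rfl⟩ := (hsupp h x).1 hx
    obtain ⟨z, hz, hzy⟩ := (hsupp h' _).1 hx'
    obtain rfl := φ.injective hzy
    simpa only [Function.comp_apply, φ.injective.eq_iff] using hdisj h h' hne z hy hz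
  · ext x
    simp only [Subgraph.map_verts, hverts, Set.image_union, ← Set.range_comp, Set.mem_union,
      Set.mem_image, Set.mem_ofPred_eq, hsupp]
    refine or_congr Iff.rfl ⟨?_, ?_⟩
    · rintro ⟨y, ⟨u, v, h, hy⟩, rfl⟩
      exact ⟨u, v, h, y, hy, rfl⟩
    · rintro ⟨u, v, h, y, hy, rfl⟩
      exact ⟨y, ⟨u, v, h, hy⟩, rfl⟩
  · ext e
    simp only [Subgraph.edgeSet_map, hedges, Set.mem_image, Set.mem_ofPred_eq, Walk.edges_map,
      List.mem_map]
    refine ⟨?_, ?_⟩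
    · rintro ⟨y, ⟨u, v, h, hy⟩, rfl⟩
      exact ⟨u, v, h, y, hy, rfl⟩
    · rintro ⟨u, v, h, y, hy, rfl⟩
      exact ⟨y, ⟨u, v, h, hy⟩, rfl⟩

lemma ContainsQuasiGeodesicSubdivGE.map {H : SimpleGraph N}
    (h : ContainsQuasiGeodesicSubdivGE H k X c) (φ : H ↪g G)
    (hφ : ∀ u v, G.edist (φ u) (φ v) = H.edist u v) :
    ContainsQuasiGeodesicSubdivGE G k X c := by
  obtain ⟨Y, hY, hYq⟩ := h
  refine ⟨Y.map φ.toHom, hY.map φ, ?_⟩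
  rintro ⟨_, u, hu, rfl⟩ ⟨_, v, hv, rfl⟩
  let ψ : Y.coe →g (Y.map φ.toHom).coe :=
    ⟨fun y => ⟨φ y, y, y.2, rfl⟩, fun {a b} hab => ⟨a, b, hab, rfl, rfl⟩⟩
  calc (Y.map φ.toHom).coe.edist (ψ ⟨u, hu⟩) (ψ ⟨v, hv⟩)
      ≤ Y.coe.edist ⟨u, hu⟩ ⟨v, hv⟩ := edist_map_le ψ _ _
    _ ≤ c * H.edist u v := hYq ⟨u, hu⟩ ⟨v, hv⟩
    _ = c * G.edist (φ u) (φ v) := by rw [hφ]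

end QuasiGeodesic

section Triangle

variable {G : SimpleGraph V} {u : V} {w : G.Walk u u} {k : ℕ}

lemma IsGeodesicClosed.nodup_tail_support (hw : IsGeodesicClosed w) :
    w.support.tail.Nodup := by
  refine List.nodup_iff_injective_getElem.2 fun i j hij => ?_
  wlog hle : i ≤ j generalizing i j
  · exact (this j i hij.symm (le_of_not_ge hle)).symm
  have hi := i.2
  have hj := j.2
  simp only [List.length_tail, Walk.length_support, Nat.add_sub_cancel] at hi hj
  simp only [List.getElem_tail, Walk.support_getElem_eq_getVert] at hij
  have hd := hw (i := i + 1) (j := j + 1) (by simpa using hle) hj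
  rw [hij, SimpleGraph.dist_self] at hd
  exact Fin.ext (by omega)

lemma IsGeodesicClosed.isQuasiGeodesic_toSubgraph (hw : IsGeodesicClosed w) :
    IsQuasiGeodesic G w.toSubgraph 1 := by
  have hwalk {i j : ℕ} (hij : i ≤ j) (hj : j ≤ w.length) :
      ∃ q : G.Walk (w.getVert i) (w.getVert j), q.toSubgraph ≤ w.toSubgraph ∧
        q.length ≤ G.dist (w.getVert i) (w.getVert j) := by
    obtain ⟨q, ⟨p, r, hsplit⟩, hq, -⟩ := exists_isSubwalk_getVert_getVert w hij hj
    have hlen : w.length = p.length + q.length + r.length := by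
      conv_lhs => rw [hsplit, Walk.length_append, Walk.length_append]
    have hsub : w.toSubgraph = p.toSubgraph ⊔ q.toSubgraph ⊔ r.toSubgraph := by
      conv_lhs => rw [hsplit, Walk.toSubgraph_append, Walk.toSubgraph_append]
    rcases min_le_iff.1 (hw hij hj) with hd | hd
    · exact ⟨q, hsub ▸ le_sup_right.trans le_sup_left, by omega⟩
    · refine ⟨(r.append p).reverse, ?_, ?_⟩
      · rw [Walk.toSubgraph_reverse, Walk.toSubgraph_append, hsub]
        exact sup_le le_sup_right (le_sup_left.trans le_sup_left)
      · rw [Walk.length_reverse, Walk.length_append]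
        omega
  refine isQuasiGeodesic_of_exists_walk fun x hx y hy => ?_
  rw [Walk.mem_verts_toSubgraph, Walk.mem_support_iff_exists_getVert] at hx hy
  obtain ⟨i, rfl, hi⟩ := hx
  obtain ⟨j, rfl, hj⟩ := hy
  rw [one_mul]
  rcases le_total i j with hij | hji
  · exact hwalk hij hj
  · obtain ⟨q, hqw, hq⟩ := hwalk hji hi
    exact ⟨q.reverse, by rwa [Walk.toSubgraph_reverse], by rwa [Walk.length_reverse, dist_comm]⟩

lemma isSubdivGE_triangleGraph {f : Fin 3 → V} (q : ∀ i, G.Walk (f i) (f (i + 1)))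
    (hnodup : ∀ i, (q i).support.tail.Nodup)
    (hdisj : ∀ i j x, x ∈ (q i).support.tail → x ∈ (q j).support.tail → i = j)
    (hlen : ∀ i, k + 1 ≤ (q i).length) :
    IsSubdivGE k triangleGraph (⨆ i, (q i).toSubgraph) := by
  have start_mem (i : Fin 3) : f i ∈ (q (i - 1)).support.tail := by
    have hi : f i = f (i - 1 + 1) := by rw [sub_add_cancel]
    rw [hi]
    refine Walk.end_mem_tail_support fun h => ?_
    have hpos := hlen (i - 1)
    rw [Walk.length_eq_zero_iff.2 h] at hpos
    omega
  have hf : Function.Injective f := fun i j hij =>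
    sub_left_injective (hdisj _ _ _ (start_mem i) (hij ▸ start_mem j))
  have hpath (i : Fin 3) : (q i).IsPath := by
    refine Walk.IsPath.mk' ((q i).cons_tail_support ▸ List.nodup_cons.2 ⟨fun h => ?_, hnodup i⟩)
    have hi : i - 1 = i := hdisj _ _ _ (start_mem i) h
    simp at hi
  have hadj : ∀ u v : Fin 3, u ≠ v ↔ ∃ i : Fin 3, s(i, i + 1) = s(u, v) := by decide
  refine isSubdivGE_iSup_toSubgraph q hadj (by decide) (fun w => ⟨w, .inl rfl⟩) hf hpath hlen ?_ ?_
  · intro i w hw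
    rcases (Walk.mem_support_iff _).1 hw with hwi | hwi
    · exact .inl (hf hwi)
    · exact .inr (sub_eq_iff_eq_add.1 (hdisj _ _ _ (start_mem w) hwi))
  · intro i j hij x hxi hxj
    rcases (Walk.mem_support_iff _).1 hxi with rfl | hxi
    · exact ⟨i, rfl⟩
    rcases (Walk.mem_support_iff _).1 hxj with rfl | hxj
    · exact ⟨j, rfl⟩
    exact absurd (hdisj i j x hxi hxj) hij

lemma isSubdivGE_triangleGraph_append {x y z : V} {a : G.Walk x y} {b : G.Walk y z}
    {c : G.Walk z x} (hnodup : (a.append (b.append c)).support.tail.Nodup)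
    (ha : k + 1 ≤ a.length) (hb : k + 1 ≤ b.length) (hc : k + 1 ≤ c.length) :
    IsSubdivGE k triangleGraph (a.append (b.append c)).toSubgraph := by
  let f : Fin 3 → V := ![x, y, z]
  let q : ∀ i : Fin 3, G.Walk (f i) (f (i + 1))
    | 0 => a
    | 1 => b
    | 2 => c
  have hsub : (a.append (b.append c)).toSubgraph = ⨆ i, (q i).toSubgraph := by
    rw [Walk.toSubgraph_append, Walk.toSubgraph_append]
    refine le_antisymm (sup_le (le_iSup (fun i => (q i).toSubgraph) 0)
      (sup_le (le_iSup (fun i => (q i).toSubgraph) 1) (le_iSup (fun i => (q i).toSubgraph) 2)))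
      (iSup_le fun i => ?_)
    fin_cases i
    exacts [le_sup_left, le_sup_left.trans le_sup_right, le_sup_right.trans le_sup_right]
  simp only [Walk.tail_support_append, List.nodup_append', List.disjoint_append_right] at hnodup
  obtain ⟨hna, ⟨hnb, hnc, hbc⟩, hab, hac⟩ := hnodup
  rw [hsub]
  refine isSubdivGE_triangleGraph q (fun i => ?_) (fun i j v hi hj => ?_) (fun i => ?_)
  · fin_cases i
    exacts [hna, hnb, hnc]
  · fin_cases i <;> fin_cases j
    exacts [rfl, (hab hi hj).elim, (hac hi hj).elim, (hab hj hi).elim, rfl, (hbc hi hj).elim,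
      (hac hj hi).elim, (hbc hj hi).elim, rfl]
  · fin_cases i
    exacts [ha, hb, hc]

lemma IsGeodesicClosed.isSubdivGE_triangleGraph (hw : IsGeodesicClosed w)
    (hlen : 3 * (k + 1) ≤ w.length) : IsSubdivGE k triangleGraph w.toSubgraph := by
  obtain ⟨s, hs⟩ : ∃ s, s = w.length / 3 := ⟨_, rfl⟩
  have hsplit : (w.take s).append (((w.drop s).take s).append ((w.drop s).drop s)) = w := by
    rw [Walk.append_take_drop_eq, Walk.append_take_drop_eq]
  rw [← hsplit]
  refine isSubdivGE_triangleGraph_append (by rw [hsplit]; exact hw.nodup_tail_support) ?_ ?_ ?_ <;>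
  · simp only [Walk.take_length, Walk.drop_length]
    omega

lemma IsGeodesicClosed.containsQuasiGeodesicSubdivGE_triangleGraph (hw : IsGeodesicClosed w)
    (hlen : 3 * (k + 1) ≤ w.length) : ContainsQuasiGeodesicSubdivGE G k triangleGraph 1 :=
  ⟨w.toSubgraph, hw.isSubdivGE_triangleGraph hlen, hw.isQuasiGeodesic_toSubgraph⟩

end Triangle

section Claw

variable {G : SimpleGraph V} {u v c : V} {k K : ℕ}

lemma IsGeodesic.exists_walk_toSubgraph_le {w : G.Walk u v} (hw : IsGeodesic w) {x y : V}
    (hx : x ∈ w.support) (hy : y ∈ w.support) :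
    ∃ q : G.Walk x y, q.toSubgraph ≤ w.toSubgraph ∧ q.length = G.dist x y := by
  have ordered {i j : ℕ} (hij : i ≤ j) (hj : j ≤ w.length) :
      ∃ q : G.Walk (w.getVert i) (w.getVert j), q.toSubgraph ≤ w.toSubgraph ∧
        q.length = G.dist (w.getVert i) (w.getVert j) := by
    obtain ⟨q, hqw, -, -⟩ := exists_isSubwalk_getVert_getVert w hij hj
    exact ⟨q, toSubgraph_le_of_isSubwalk hqw, length_eq_dist_of_subwalk hw hqw⟩
  obtain ⟨i, rfl, hi⟩ := Walk.mem_support_iff_exists_getVert.1 hx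
  obtain ⟨j, rfl, hj⟩ := Walk.mem_support_iff_exists_getVert.1 hy
  rcases le_total i j with hij | hji
  · exact ordered hij hj
  · obtain ⟨q, hqw, hq⟩ := ordered hji hi
    exact ⟨q.reverse, by rwa [Walk.toSubgraph_reverse], by rwa [Walk.length_reverse, dist_comm]⟩

lemma isSubdivGE_clawGraph {x : Fin 3 → V} (q : ∀ i, G.Walk c (x i)) (hq : ∀ i, (q i).IsPath)
    (hlen : ∀ i, k + 1 ≤ (q i).length)
    (hdisj : ∀ i j y, i ≠ j → y ∈ (q i).support → y ∈ (q j).support → y = c) :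
    IsSubdivGE k clawGraph (⨆ i, (q i).toSubgraph) := by
  have hxc (i : Fin 3) : x i ≠ c := by
    have isPath_self {y : V} (p : G.Walk c y) (hp : p.IsPath) (hy : y = c) : p.length = 0 := by
      subst hy
      exact Walk.length_eq_zero_iff.2 (Walk.isPath_iff_nil.1 hp)
    intro h
    have hpos := hlen i
    rw [isPath_self (q i) (hq i) h] at hpos
    omega
  have eq_of_mem {i j : Fin 3} (h : x i ∈ (q j).support) : i = j := by
    by_contra hij
    exact hxc i (hdisj i j _ hij (q i).end_mem_support h)
  let f : Fin 4 → V := Fin.cons c x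
  have hf : Function.Injective f := Fin.cons_injective_iff.2 ⟨fun ⟨i, hi⟩ => hxc i hi,
    fun i j hij => eq_of_mem (by rw [hij]; exact (q j).end_mem_support)⟩
  have hadj : ∀ u v, clawGraph.Adj u v ↔ ∃ i : Fin 3, s(0, i.succ) = s(u, v) := by
    simp only [clawGraph, SimpleGraph.fromRel_adj]
    decide
  refine isSubdivGE_iSup_toSubgraph (s := fun _ => 0) (t := Fin.succ) (f := f) q hadj
    (by decide) (by decide) hf hq hlen (fun i w hw => ?_) (fun i j hij y hi hj => ?_)
  · cases w using Fin.cases with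
    | zero => exact .inl rfl
    | succ j => exact .inr (congrArg Fin.succ (eq_of_mem hw))
  · exact ⟨0, (hdisj i j y hij hi hj).symm⟩

lemma containsQuasiGeodesicSubdivGE_clawGraph {x : Fin 3 → V} (q : ∀ i, G.Walk c (x i))
    (hq : ∀ i, IsGeodesic (q i)) (hlen : ∀ i, k + 1 ≤ (q i).length) (hK : 1 ≤ K)
    (hcross : ∀ i j, i ≠ j → ∀ u ∈ (q i).support, ∀ v ∈ (q j).support,
      G.dist c u + G.dist c v ≤ K * G.dist u v) :
    ContainsQuasiGeodesicSubdivGE G k clawGraph K := by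
  refine ⟨⨆ i, (q i).toSubgraph,
    isSubdivGE_clawGraph q (fun i => Walk.isPath_of_length_eq_dist _ (hq i)) hlen
      fun i j y hij hi hj => ?_, isQuasiGeodesic_of_exists_walk fun u hu v hv => ?_⟩
  · have hc := hcross i j hij y hi y hj
    rw [SimpleGraph.dist_self, mul_zero] at hc
    obtain ⟨p, -, -⟩ := (hq i).exists_walk_toSubgraph_le (q i).start_mem_support hi
    exact (p.reachable.dist_eq_zero_iff.1 (by omega)).symm
  · simp only [Subgraph.verts_iSup, Set.mem_iUnion, Walk.mem_verts_toSubgraph] at hu hv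
    obtain ⟨i, hi⟩ := hu
    obtain ⟨j, hj⟩ := hv
    by_cases hij : i = j
    · subst hij
      obtain ⟨p, hp, hlen⟩ := (hq i).exists_walk_toSubgraph_le hi hj
      exact ⟨p, hp.trans (le_iSup (fun i => (q i).toSubgraph) i),
        hlen.trans_le (Nat.le_mul_of_pos_left _ hK)⟩
    · obtain ⟨p, hp, hplen⟩ := (hq i).exists_walk_toSubgraph_le (q i).start_mem_support hi
      obtain ⟨r, hr, hrlen⟩ := (hq j).exists_walk_toSubgraph_le (q j).start_mem_support hj
      refine ⟨p.reverse.append r, ?_, ?_⟩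
      · rw [Walk.toSubgraph_append, Walk.toSubgraph_reverse]
        exact sup_le (hp.trans (le_iSup (fun i => (q i).toSubgraph) i))
          (hr.trans (le_iSup (fun i => (q i).toSubgraph) j))
      · rw [Walk.length_append, Walk.length_reverse, hplen, hrlen]
        exact hcross i j hij u hi v hj

lemma IsGeodesic.dist_add_dist_of_append {A : G.Walk u c} {B : G.Walk c v}
    (hAB : IsGeodesic (A.append B)) {y z : V} (hy : y ∈ A.support) (hz : z ∈ B.support) :
    G.dist y c + G.dist c z = G.dist y z := by
  obtain ⟨A₁, A₂, rfl⟩ := Walk.mem_support_iff_exists_append.1 hy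
  obtain ⟨B₁, B₂, rfl⟩ := Walk.mem_support_iff_exists_append.1 hz
  obtain ⟨s, hs⟩ := (A₂.append B₁).reachable.exists_walk_length_eq_dist
  refine le_antisymm ?_ ?_
  · have hshort := dist_le (A₁.append (s.append B₂))
    have hlen : _ = G.dist u v := hAB
    have hA := dist_le A₂
    have hB := dist_le B₁
    simp only [Walk.length_append] at hshort hlen
    omega
  · exact A₂.reachable.dist_triangle_left z

lemma IsGeodesic.dist_add_dist_le_three_mul (hG : G.Connected) {S : G.Walk c v}
    (hS : IsGeodesic S) {y z : V} (hvy : G.dist v c ≤ G.dist v y) (hz : z ∈ S.support) :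
    G.dist c y + G.dist c z ≤ 3 * G.dist y z := by
  obtain ⟨S₁, S₂, rfl⟩ := Walk.mem_support_iff_exists_append.1 hz
  have hcz := IsGeodesic.dist_add_dist_of_append hS S₁.start_mem_support S₂.end_mem_support
  have hvzy := hG.dist_triangle (u := v) (v := z) (w := y)
  have hczy := hG.dist_triangle (u := c) (v := z) (w := y)
  rw [dist_comm (u := v) (v := c)] at hvy
  rw [dist_comm (u := v) (v := z)] at hvzy
  rw [dist_comm (u := y) (v := z)]
  omega

lemma containsQuasiGeodesicSubdivGE_clawGraph_of_forall_dist_le (hG : G.Connected) {a b : V}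
    {A : G.Walk a c} {B : G.Walk c b} (hAB : IsGeodesic (A.append B))
    (hv : ∀ y ∈ (A.append B).support, G.dist v c ≤ G.dist v y)
    (hA : k + 1 ≤ A.length) (hB : k + 1 ≤ B.length) (hc : k + 1 ≤ G.dist v c) :
    ContainsQuasiGeodesicSubdivGE G k clawGraph 3 := by
  obtain ⟨S, hS : IsGeodesic S⟩ := hG.exists_walk_length_eq_dist c v
  have hArev : IsGeodesic A.reverse :=
    IsGeodesic.reverse (length_eq_dist_of_subwalk hAB ⟨.nil, B, rfl⟩)
  have hB' : IsGeodesic B := length_eq_dist_of_subwalk hAB ⟨A, .nil, (Walk.append_nil _).symm⟩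
  let q : ∀ i : Fin 3, G.Walk c (![a, b, v] i)
    | 0 => A.reverse
    | 1 => B
    | 2 => S
  have hsupp (y : V) : y ∈ (A.append B).support ↔ y ∈ A.reverse.support ∨ y ∈ B.support := by
    rw [Walk.mem_support_append_iff, Walk.support_reverse, List.mem_reverse]
  have hcrossP {y z : V} (hy : y ∈ A.reverse.support) (hz : z ∈ B.support) :
      G.dist c y + G.dist c z ≤ 3 * G.dist y z := by
    have hyz := hAB.dist_add_dist_of_append (List.mem_reverse.1 (A.support_reverse ▸ hy)) hz
    rw [dist_comm] at hyz
    omega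
  have hcross {i j : Fin 3} (hij : i < j) (y : V) (hy : y ∈ (q i).support) (z : V)
      (hz : z ∈ (q j).support) : G.dist c y + G.dist c z ≤ 3 * G.dist y z := by
    fin_cases i <;> fin_cases j <;> simp only [Fin.reduceFinMk, Fin.reduceLT] at hij
    · exact hcrossP hy hz
    · exact hS.dist_add_dist_le_three_mul hG (hv y ((hsupp y).2 (.inl hy))) hz
    · exact hS.dist_add_dist_le_three_mul hG (hv y ((hsupp y).2 (.inr hy))) hz
  refine containsQuasiGeodesicSubdivGE_clawGraph q (fun i => ?_) (fun i => ?_) (by norm_num)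
    fun i j hij y hy z hz => ?_
  · fin_cases i
    exacts [hArev, hB', hS]
  · fin_cases i
    exacts [A.length_reverse ▸ hA, hB, hS ▸ dist_comm (u := v) ▸ hc]
  · rcases hij.lt_or_gt with hlt | hgt
    · exact hcross hlt y hy z hz
    · rw [add_comm, dist_comm (u := y)]
      exact hcross hgt z hz y hy

end Claw

section Projection

variable {G : SimpleGraph V} {a b : V} {P : G.Walk a b} {π : V → ℕ}

/-- `π` sends every vertex to the index of a nearest vertex of `P`, and it is constant along some
shortest path from each vertex to `P`. -/
structure IsProjection (P : G.Walk a b) (π : V → ℕ) : Prop where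
  le_length : ∀ v, π v ≤ P.length
  dist_le : ∀ v, ∀ i ≤ P.length, G.dist v (P.getVert (π v)) ≤ G.dist v (P.getVert i)
  exists_walk : ∀ v, ∃ w : G.Walk v (P.getVert (π v)), IsGeodesic w ∧ ∀ x ∈ w.support, π x = π v

lemma exists_isProjection (hG : G.Connected) (P : G.Walk a b) : ∃ π, IsProjection P π := by
  classical
  have hnear (v : V) : ∃ i ≤ P.length, ∀ j ≤ P.length,
      G.dist v (P.getVert i) ≤ G.dist v (P.getVert j) := by
    obtain ⟨i, hi, hmin⟩ := Finset.exists_min_image (Finset.range (P.length + 1))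
      (fun i => G.dist v (P.getVert i)) ⟨0, Finset.mem_range.2 (Nat.succ_pos _)⟩
    simp only [Finset.mem_range, Nat.lt_succ_iff] at hi hmin
    exact ⟨i, hi, hmin⟩
  refine ⟨fun v => Nat.find (hnear v), fun v => (Nat.find_spec (hnear v)).1,
    fun v => (Nat.find_spec (hnear v)).2, fun v => ?_⟩
  obtain ⟨hle, hmin⟩ := Nat.find_spec (hnear v)
  obtain ⟨w, hw⟩ := hG.exists_walk_length_eq_dist v (P.getVert (Nat.find (hnear v)))
  refine ⟨w, hw, fun x hx => ?_⟩
  obtain ⟨w₁, w₂, rfl⟩ := Walk.mem_support_iff_exists_append.1 hx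
  have hsplit := IsGeodesic.dist_add_dist_of_append hw w₁.start_mem_support w₂.end_mem_support
  refine le_antisymm (Nat.find_min' _ ⟨hle, fun j hj => ?_⟩)
    (Nat.find_min' _ ⟨(Nat.find_spec (hnear x)).1, fun j hj => ?_⟩)
  · have hvj := hmin j hj
    have hvxj := hG.dist_triangle (u := v) (v := x) (w := P.getVert j)
    omega
  · have hvj := hmin j hj
    have hxx := (Nat.find_spec (hnear x)).2 _ hle
    have hvxj := hG.dist_triangle (u := v) (v := x) (w := P.getVert (Nat.find (hnear x)))
    omega

lemma IsProjection.reverse (hπ : IsProjection P π) :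
    IsProjection P.reverse fun v => P.length - π v := by
  have hget (v : V) : P.reverse.getVert (P.length - π v) = P.getVert (π v) := by
    rw [Walk.getVert_reverse, Nat.sub_sub_self (hπ.le_length v)]
  refine ⟨fun v => by rw [Walk.length_reverse]; exact Nat.sub_le _ _, fun v i _ => ?_, fun v => ?_⟩
  · rw [hget, Walk.getVert_reverse]
    exact hπ.dist_le v _ (Nat.sub_le _ _)
  · rw [hget]
    obtain ⟨w, hw, hconst⟩ := hπ.exists_walk v
    exact ⟨w, hw, fun x hx => by rw [hconst x hx]⟩

/-- The distance from `v` to its projection, that is, from `v` to `P`. -/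
noncomputable def depth (P : G.Walk a b) (π : V → ℕ) (v : V) : ℕ :=
  G.dist v (P.getVert (π v))

lemma IsProjection.depth_reverse (hπ : IsProjection P π) (v : V) :
    depth P.reverse (fun v => P.length - π v) v = depth P π v := by
  rw [depth, Walk.getVert_reverse, Nat.sub_sub_self (hπ.le_length v), depth]

lemma IsProjection.depth_le_dist_add (hπ : IsProjection P π) (hG : G.Connected) (u v : V) :
    depth P π u ≤ G.dist u v + depth P π v :=
  (hπ.dist_le u _ (hπ.le_length v)).trans hG.dist_triangle

lemma IsProjection.apply_le_add (hπ : IsProjection P π) (hG : G.Connected) (hP : IsGeodesic P)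
    (u v : V) : π v ≤ π u + (depth P π u + G.dist u v + depth P π v) := by
  rcases le_total (π v) (π u) with hle | hle
  · exact hle.trans (Nat.le_add_right _ _)
  · have huv := hP.dist_getVert_getVert hle (hπ.le_length v)
    have hu := hG.dist_triangle (u := P.getVert (π u)) (v := u) (w := P.getVert (π v))
    have hv := hG.dist_triangle (u := u) (v := v) (w := P.getVert (π v))
    rw [dist_comm (v := u)] at hu
    simp only [depth]
    omega

lemma IsProjection.apply_getVert (hπ : IsProjection P π) (hG : G.Connected) (hP : IsGeodesic P)
    {t : ℕ} (ht : t ≤ P.length) : π (P.getVert t) = t := by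
  have hzero := hπ.dist_le (P.getVert t) t ht
  rw [SimpleGraph.dist_self, Nat.le_zero, hG.dist_eq_zero_iff] at hzero
  have hPath := Walk.isPath_of_length_eq_dist P hP
  exact (hPath.getVert_injOn ht (hπ.le_length _) hzero).symm

end Projection

section Attachment

variable {G : SimpleGraph V} {a b : V} {P : G.Walk a b} {π : V → ℕ} {ℓ : ℕ}

/-- Only the ends of `P` lead away from it: the vertices at distance more than `ℓ` from `P`, and
their neighbours, project to within `ℓ` of the ends of `P`. -/
structure AttachesAtEnds (P : G.Walk a b) (π : V → ℕ) (ℓ : ℕ) : Prop where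
  of_lt_depth : ∀ ⦃v⦄, ℓ < depth P π v → π v ≤ ℓ ∨ P.length ≤ π v + ℓ
  of_adj : ∀ ⦃u v⦄, G.Adj u v → ℓ < depth P π u → depth P π v ≤ ℓ →
    π u ≤ ℓ ∧ π v ≤ ℓ ∨ P.length ≤ π u + ℓ ∧ P.length ≤ π v + ℓ

lemma le_or_length_le_add_of_forall_dist_le (hG : G.Connected) (hP : IsGeodesic P)
    (hclaw : ¬ ContainsQuasiGeodesicSubdivGE G ℓ clawGraph 3) {v : V} {i : ℕ} (hi : i ≤ P.length)
    (hmin : ∀ j ≤ P.length, G.dist v (P.getVert i) ≤ G.dist v (P.getVert j))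
    (hv : ℓ < G.dist v (P.getVert i)) : i ≤ ℓ ∨ P.length ≤ i + ℓ := by
  by_contra! hmid
  have hsplit : (P.take i).append (P.drop i) = P := P.append_take_drop_eq i
  refine hclaw (containsQuasiGeodesicSubdivGE_clawGraph_of_forall_dist_le hG (hsplit ▸ hP)
    (fun y hy => ?_) ?_ ?_ hv)
  · rw [hsplit, Walk.mem_support_iff_exists_getVert] at hy
    obtain ⟨j, rfl, hj⟩ := hy
    exact hmin j hj
  · rw [Walk.take_length]
    omega
  · rw [Walk.drop_length]
    omega

lemma IsProjection.attachesAtEnds (hπ : IsProjection P π) (hG : G.Connected) (hP : IsGeodesic P)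
    (hclaw : ¬ ContainsQuasiGeodesicSubdivGE G ℓ clawGraph 3) (hlen : 4 * ℓ + 3 ≤ P.length) :
    AttachesAtEnds P π ℓ := by
  have of_lt_depth {v} (hv : ℓ < depth P π v) : π v ≤ ℓ ∨ P.length ≤ π v + ℓ :=
    le_or_length_le_add_of_forall_dist_le hG hP hclaw (hπ.le_length v) (hπ.dist_le v) hv
  refine ⟨fun v => of_lt_depth, fun u v huv hu hv => ?_⟩
  have huv_dist : G.dist u v = 1 := dist_eq_one_iff_adj.2 huv
  have hdepth := hπ.depth_le_dist_add hG u v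
  have huπ := hπ.apply_le_add hG hP u v
  have hvπ := hπ.apply_le_add hG hP v u
  rw [dist_comm] at hvπ
  have hv_near (j : ℕ) (hj : j ≤ P.length) :
      G.dist u (P.getVert (π v)) ≤ G.dist u (P.getVert j) := by
    have huj := hπ.dist_le u j hj
    have huv_tri := hG.dist_triangle (u := u) (v := v) (w := P.getVert (π v))
    simp only [depth] at hu hv
    omega
  have hu_end := of_lt_depth hu
  have hv_end := le_or_length_le_add_of_forall_dist_le hG hP hclaw (hπ.le_length v) hv_near
    (hu.trans_le (hπ.dist_le u _ (hπ.le_length v)))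
  omega

lemma AttachesAtEnds.reverse (hA : AttachesAtEnds P π ℓ) (hπ : IsProjection P π) :
    AttachesAtEnds P.reverse (fun v => P.length - π v) ℓ := by
  refine ⟨fun v hv => ?_, fun u v huv hu hv => ?_⟩
  · rw [hπ.depth_reverse] at hv
    rw [Walk.length_reverse]
    have hend := hA.of_lt_depth hv
    have hle := hπ.le_length v
    omega
  · rw [hπ.depth_reverse] at hu hv
    rw [Walk.length_reverse]
    have hend := hA.of_adj huv hu hv
    have hule := hπ.le_length u
    have hvle := hπ.le_length v
    omega

end Attachment

section JumpWeight

variable {G : SimpleGraph V} {a b u v : V} {P : G.Walk a b} {π : V → ℕ} {ℓ c : ℕ}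

/-- The indicator of the vertices which project beyond the index `c`. -/
def side (π : V → ℕ) (c : ℕ) (v : V) : ℤ :=
  if c < π v then 1 else 0

/-- The weight which counts, with signs, how often a walk jumps between the two ends of `P` at
distance more than `ℓ` from `P`. -/
noncomputable def jumpWeight (P : G.Walk a b) (π : V → ℕ) (ℓ : ℕ) (u v : V) : ℤ :=
  if ℓ < depth P π u ∧ ℓ < depth P π v then side π ℓ v - side π ℓ u else 0

lemma jumpWeight_swap (P : G.Walk a b) (π : V → ℕ) (ℓ : ℕ) (u v : V) :
    jumpWeight P π ℓ v u = -jumpWeight P π ℓ u v := by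
  simp only [jumpWeight, and_comm (a := ℓ < depth P π v)]
  split_ifs
  · rw [neg_sub]
  · rfl

lemma jumpWeight_eq_zero_of_apply_eq (P : G.Walk a b) (ℓ : ℕ) (h : π u = π v) :
    jumpWeight P π ℓ u v = 0 := by
  simp [jumpWeight, side, h]

lemma lt_depth_of_jumpWeight_ne_zero (h : jumpWeight P π ℓ u v ≠ 0) :
    ℓ < depth P π u ∧ ℓ < depth P π v := by
  by_contra hnear
  exact h (if_neg hnear)

lemma AttachesAtEnds.jumpWeight_eq_side_sub (hA : AttachesAtEnds P π ℓ) (hℓc : ℓ ≤ c)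
    (hc : c + ℓ < P.length) (huv : G.Adj u v)
    (hnear : depth P π u ≤ ℓ → depth P π v ≤ ℓ → (c < π u ↔ c < π v)) :
    jumpWeight P π ℓ u v = side π c v - side π c u := by
  have side_far {z : V} (hz : ℓ < depth P π z) : side π ℓ z = side π c z := by
    have hend := hA.of_lt_depth hz
    exact if_congr (by omega) rfl rfl
  have side_eq (h : c < π u ↔ c < π v) : 0 = side π c v - side π c u := by
    rw [side, side, if_congr h rfl rfl, sub_self]
  rw [jumpWeight]
  split_ifs with hfar
  · rw [side_far hfar.1, side_far hfar.2]
  rcases le_or_gt (depth P π u) ℓ with hu | hu <;> rcases le_or_gt (depth P π v) ℓ with hv | hv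
  · exact side_eq (hnear hu hv)
  · have hend := hA.of_adj huv.symm hv hu
    exact side_eq (by omega)
  · have hend := hA.of_adj huv hu hv
    exact side_eq (by omega)
  · exact absurd ⟨hu, hv⟩ hfar

lemma AttachesAtEnds.exists_near_of_weight_ne_zero (hA : AttachesAtEnds P π ℓ) {w : G.Walk u u}
    (hw : weight (jumpWeight P π ℓ) w ≠ 0) (hℓc : ℓ ≤ c) (hc : c + ℓ < P.length) :
    ∃ x ∈ w.support, ∃ y ∈ w.support,
      depth P π x ≤ ℓ ∧ depth P π y ≤ ℓ ∧ π x ≤ c ∧ c < π y := by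
  contrapose! hw
  rw [weight_eq_sub (φ := side π c) w fun d hd => ?_, sub_self]
  have hfst := w.dart_fst_mem_support_of_mem_darts hd
  have hsnd := w.dart_snd_mem_support_of_mem_darts hd
  refine hA.jumpWeight_eq_side_sub hℓc hc d.adj fun hu hv => ⟨fun h => ?_, fun h => ?_⟩
  · by_contra! hle
    exact (hw _ hsnd _ hfst hv hu hle).not_gt h
  · by_contra! hle
    exact (hw _ hfst _ hsnd hu hv hle).not_gt h

lemma IsProjection.exists_weight_eq_jumpWeight (hπ : IsProjection P π) (huv : G.Adj u v) :
    ∃ w : G.Walk u u, weight (jumpWeight P π ℓ) w = jumpWeight P π ℓ u v := by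
  have weight_eq_zero {x y : V} {w : G.Walk x y}
      (h : ∀ d ∈ w.darts, jumpWeight P π ℓ d.fst d.snd = 0) : weight (jumpWeight P π ℓ) w = 0 := by
    by_contra hne
    obtain ⟨d, hd, hd0⟩ := exists_mem_darts_ne_zero hne
    exact hd0 (h d hd)
  have to_path (z : V) : ∃ w : G.Walk z (P.getVert (π z)), weight (jumpWeight P π ℓ) w = 0 := by
    obtain ⟨w, -, hconst⟩ := hπ.exists_walk z
    refine ⟨w, weight_eq_zero fun d hd => jumpWeight_eq_zero_of_apply_eq P ℓ ?_⟩
    rw [hconst _ (w.dart_fst_mem_support_of_mem_darts hd),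
      hconst _ (w.dart_snd_mem_support_of_mem_darts hd)]
  have along_path :
      weight (jumpWeight P π ℓ) ((P.take (π v)).reverse.append (P.take (π u))) = 0 := by
    refine weight_eq_zero fun d hd => ?_
    by_contra hne
    have hdP : d.fst ∈ P.support := by
      have hd' := Walk.dart_fst_mem_support_of_mem_darts _ hd
      rw [Walk.mem_support_append_iff, Walk.support_reverse, List.mem_reverse] at hd'
      exact hd'.elim ((P.isSubwalk_take _).support_subset ·) ((P.isSubwalk_take _).support_subset ·)
    obtain ⟨t, ht, htP⟩ := Walk.mem_support_iff_exists_getVert.1 hdP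
    have hdepth := hπ.dist_le d.fst t htP
    rw [ht, SimpleGraph.dist_self] at hdepth
    exact (Nat.zero_le ℓ).not_gt ((lt_depth_of_jumpWeight_ne_zero hne).1.trans_le hdepth)
  obtain ⟨wu, hwu⟩ := to_path u
  obtain ⟨wv, hwv⟩ := to_path v
  refine ⟨huv.toWalk.append
    (wv.append (((P.take (π v)).reverse.append (P.take (π u))).append wu.reverse)), ?_⟩
  rw [weight_append, weight_append, weight_append, along_path, hwv,
    weight_reverse (jumpWeight_swap P π ℓ), hwu, weight_toWalk]
  simp only [neg_zero, add_zero]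

end JumpWeight

section Depth

variable {G : SimpleGraph V} {a b u v : V} {P : G.Walk a b} {π : V → ℕ} {ℓ m : ℕ}

lemma AttachesAtEnds.two_mul_lt_depth (hA : AttachesAtEnds P π ℓ) (hπ : IsProjection P π)
    (hG : G.Connected) (hP : IsGeodesic P) (hlen : 6 * ℓ + 3 ≤ P.length) (huv : G.Adj u v)
    (hjump : jumpWeight P π ℓ u v ≠ 0) : 2 * ℓ < depth P π u := by
  obtain ⟨hu, hv⟩ := lt_depth_of_jumpWeight_ne_zero hjump
  have hdiff : ¬(ℓ < π u ↔ ℓ < π v) := by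
    intro h
    rw [jumpWeight, if_pos ⟨hu, hv⟩, side, side, if_congr h rfl rfl] at hjump
    exact hjump (sub_self _)
  have hdist : G.dist u v = 1 := dist_eq_one_iff_adj.2 huv
  have hdepth := hπ.depth_le_dist_add hG v u
  have huπ := hπ.apply_le_add hG hP u v
  have hvπ := hπ.apply_le_add hG hP v u
  rw [dist_comm] at hdepth hvπ
  have hu_end := hA.of_lt_depth hu
  have hv_end := hA.of_lt_depth hv
  omega

lemma AttachesAtEnds.le_length_cons (hA : AttachesAtEnds P π ℓ) (hπ : IsProjection P π)
    (hG : G.Connected) (hP : IsGeodesic P) (hlen : 6 * ℓ + 3 ≤ P.length) (huv : G.Adj u v)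
    {q : G.Walk v u} (hjump : jumpWeight P π ℓ u v ≠ 0)
    (hw : weight (jumpWeight P π ℓ) (.cons huv q) ≠ 0) :
    4 * ℓ + 6 ≤ (Walk.cons huv q).length := by
  have mem_q {z : V} (hz : z ∈ (Walk.cons huv q).support) : z ∈ q.support := by
    rcases List.mem_cons.1 (Walk.support_cons huv q ▸ hz) with rfl | hz
    exacts [q.end_mem_support, hz]
  obtain ⟨y, hy, -, -, hyℓ, -, hyπ, -⟩ :=
    hA.exists_near_of_weight_ne_zero hw le_rfl (by omega : ℓ + ℓ < P.length)
  obtain ⟨-, -, z, hz, -, hzℓ, -, hzπ⟩ :=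
    hA.exists_near_of_weight_ne_zero hw (c := P.length - ℓ - 1) (by omega) (by omega)
  have hyz : 2 * ℓ + 3 ≤ G.dist y z := by
    have hsep := hπ.apply_le_add hG hP y z
    omega
  have hu := hA.two_mul_lt_depth hπ hG hP hlen huv hjump
  have hv := hA.two_mul_lt_depth hπ hG hP hlen huv.symm
    (by rwa [jumpWeight_swap, neg_ne_zero])
  have hvy := hπ.depth_le_dist_add hG v y
  have hvz := hπ.depth_le_dist_add hG v z
  have hyu := hπ.depth_le_dist_add hG u y
  have hzu := hπ.depth_le_dist_add hG u z
  rw [dist_comm] at hyu hzu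
  rw [Walk.length_cons]
  have hq := dist_add_dist_add_dist_le_length q (mem_q hy) (mem_q hz)
  omega

lemma AttachesAtEnds.jumpWeight_eq_zero (hA : AttachesAtEnds P π ℓ) (hπ : IsProjection P π)
    (hG : G.Connected) (hP : IsGeodesic P) (hlen : 6 * ℓ + 3 ≤ P.length) (hm : 3 * m ≤ 4 * ℓ + 3)
    (htri : ¬ ContainsQuasiGeodesicSubdivGE G m triangleGraph 1) (huv : G.Adj u v) :
    jumpWeight P π ℓ u v = 0 := by
  by_contra hjump
  obtain ⟨w, hw⟩ := hπ.exists_weight_eq_jumpWeight (ℓ := ℓ) huv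
  obtain ⟨x, y, hxy, q, hxy_ne, hweight, hgeo⟩ :=
    exists_isGeodesicClosed_cons hG (jumpWeight_swap P π ℓ) w (hw ▸ hjump)
  have hlength := hA.le_length_cons hπ hG hP hlen hxy hxy_ne hweight
  exact htri (hgeo.containsQuasiGeodesicSubdivGE_triangleGraph (by omega))

lemma AttachesAtEnds.depth_le_of_apply_le (hA : AttachesAtEnds P π ℓ) (hπ : IsProjection P π)
    (hG : G.Connected) (hP : IsGeodesic P) (hlen : 2 * ℓ < P.length)
    (hjump : ∀ ⦃x y⦄, G.Adj x y → jumpWeight P π ℓ x y = 0)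
    (hvb : G.dist v b ≤ P.length) (hv : π v ≤ ℓ) : depth P π v ≤ 3 * ℓ := by
  by_contra! hdeep
  obtain ⟨S, hS⟩ := hG.exists_walk_length_eq_dist v b
  have hb : ℓ < π b := by
    have hbπ := hπ.apply_getVert hG hP le_rfl
    rw [Walk.getVert_length] at hbπ
    omega
  obtain ⟨d, hd, hfst, hsnd⟩ := S.exists_boundary_dart {z | π z ≤ ℓ} hv hb.not_ge
  have hfst_far : ℓ < depth P π d.fst := by
    by_contra! hnear
    obtain ⟨S₁, S₂, rfl⟩ :=
      Walk.mem_support_iff_exists_append.1 (S.dart_fst_mem_support_of_mem_darts hd)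
    have hsplit := IsGeodesic.dist_add_dist_of_append hS S₁.start_mem_support S₂.end_mem_support
    have hdb := hP.dist_getVert_getVert (hπ.le_length d.fst) le_rfl
    have htri := hG.dist_triangle (u := P.getVert (π d.fst)) (v := d.fst) (w := b)
    have hdepth := hπ.depth_le_dist_add hG v d.fst
    rw [Walk.getVert_length] at hdb
    rw [dist_comm (v := d.fst), ← depth] at htri
    rw [Set.mem_ofPred_eq] at hfst
    omega
  rw [Set.mem_ofPred_eq] at hfst hsnd
  rcases le_or_gt (depth P π d.snd) ℓ with hnear | hfar
  · have hends := hA.of_adj d.adj hfst_far hnear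
    omega
  · have hzero := hjump d.adj
    rw [jumpWeight, if_pos ⟨hfst_far, hfar⟩, side, side, if_pos (not_le.1 hsnd),
      if_neg hfst.not_gt] at hzero
    norm_num at hzero

lemma IsProjection.depth_le (hπ : IsProjection P π) (hG : G.Connected) (hP : IsGeodesic P)
    (hdiam : ∀ x y, G.dist x y ≤ P.length) (hlen : 6 * ℓ + 3 ≤ P.length) (hm : 3 * m ≤ 4 * ℓ + 3)
    (htri : ¬ ContainsQuasiGeodesicSubdivGE G m triangleGraph 1)
    (hclaw : ¬ ContainsQuasiGeodesicSubdivGE G ℓ clawGraph 3) (v : V) :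
    depth P π v ≤ 3 * ℓ := by
  rcases le_or_gt (depth P π v) ℓ with hnear | hfar
  · omega
  have hA := hπ.attachesAtEnds hG hP hclaw (by omega)
  have hPrev : 6 * ℓ + 3 ≤ P.reverse.length := by rwa [Walk.length_reverse]
  rcases hA.of_lt_depth hfar with hv | hv
  · exact hA.depth_le_of_apply_le hπ hG hP (by omega)
      (fun x y => hA.jumpWeight_eq_zero hπ hG hP hlen hm htri) (hdiam v b) hv
  · have hArev := hA.reverse hπ
    rw [← hπ.depth_reverse]
    exact hArev.depth_le_of_apply_le hπ.reverse hG hP.reverse (by omega)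
      (fun x y => hArev.jumpWeight_eq_zero hπ.reverse hG hP.reverse hPrev hm htri)
      ((hdiam v a).trans_eq P.length_reverse.symm) (by omega)

end Depth

section IntervalLayout

variable {G : SimpleGraph V} {R r : ℕ} {f : V → ℕ}

/-- The vertices `v` whose interval `[f v, f v + R]` contains `j`: the `j`-th bag of the
decomposition modelled on a path in which `v` occupies that interval. -/
def intervalBag (f : V → ℕ) (R j : ℕ) : Set V :=
  {v | f v ≤ j ∧ j ≤ f v + R}

/-- Assigning to each vertex `v` the interval `[f v, f v + R]` makes the intervals of adjacent
vertices meet and all bags have radius at most `r`. -/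
structure IsIntervalLayout (G : SimpleGraph V) (R r : ℕ) (f : V → ℕ) : Prop where
  le_add_of_adj : ∀ ⦃u v⦄, G.Adj u v → f u ≤ f v + R
  radiusLE_bag : ∀ j, radiusLE (G.induce (intervalBag f R j)) r

lemma IsIntervalLayout.mono_radius {r' : ℕ} (hf : IsIntervalLayout G R r f) (hr : r ≤ r') :
    IsIntervalLayout G R r' f :=
  ⟨hf.le_add_of_adj, fun j hne => (hf.radiusLE_bag j hne).imp fun _ hz v =>
    (hz v).trans (Nat.cast_le.2 hr)⟩

lemma edist_induce_le_length {S : Set V} {u v : V} (w : G.Walk u v) (hw : ∀ x ∈ w.support, x ∈ S) :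
    (G.induce S).edist ⟨u, hw u w.start_mem_support⟩ ⟨v, hw v w.end_mem_support⟩ ≤ w.length := by
  have hlen := congrArg Walk.length (w.map_induce hw)
  rw [Walk.length_map] at hlen
  exact (edist_le (w.induce S hw)).trans_eq (congrArg Nat.cast hlen)

lemma isUnionOfPaths_pathGraph (n : ℕ) : IsUnionOfPaths (pathGraph n) := by
  intro C
  have hC : C.supp = Set.univ := by
    ext x
    induction C using ConnectedComponent.ind with
    | h v => simpa using pathGraph_preconnected n x v
  rw [hC]
  exact ⟨n, ⟨induceUnivIso _⟩⟩

lemma connected_induce_pathGraph {n a b : ℕ} (hab : a ≤ b) (hb : b < n) :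
    ((pathGraph n).induce {h : Fin n | a ≤ h ∧ h ≤ b}).Connected := by
  let φ : pathGraph (b - a + 1) →g (pathGraph n).induce {h : Fin n | a ≤ h ∧ h ≤ b} :=
    ⟨fun i => ⟨⟨a + i, by omega⟩, by simp only [Set.mem_ofPred_eq]; omega⟩, fun {i j} hij => by
      simp only [comap_adj, Function.Embedding.subtype_apply, pathGraph_adj] at hij ⊢
      omega⟩
  have hφ : Function.Surjective φ := by
    rintro ⟨⟨h, hn⟩, hah, hhb⟩
    simp only at hah hhb
    exact ⟨⟨h - a, by omega⟩, Subtype.ext (Fin.ext (Nat.add_sub_cancel' hah))⟩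
  exact (pathGraph_connected (b - a)).map φ hφ

lemma IsIntervalLayout.exists_isGraphDecomp [Finite V] (hf : IsIntervalLayout G R r f) :
    ∃ (n : ℕ) (Hg : SimpleGraph (Fin n)) (B : Fin n → Set V),
      IsUnionOfPaths Hg ∧ IsGraphDecomp G Hg B ∧ ∀ h, radiusLE (G.induce (B h)) r := by
  obtain ⟨M, hM⟩ := (Set.finite_range f).bddAbove
  replace hM (v : V) : f v ≤ M := hM ⟨v, rfl⟩
  refine ⟨M + R + 1, pathGraph _, fun j => intervalBag f R j, isUnionOfPaths_pathGraph _,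
    ⟨fun v => ?_, fun u v huv => ?_, fun v => ?_⟩, fun j => hf.radiusLE_bag j⟩
  · exact ⟨⟨f v, by linarith [hM v]⟩, le_rfl, Nat.le_add_right _ _⟩
  · have huM := hM u
    have hvM := hM v
    exact ⟨⟨max (f u) (f v), by omega⟩,
      ⟨le_max_left _ _, max_le (Nat.le_add_right _ _) (hf.le_add_of_adj huv.symm)⟩,
      ⟨le_max_right _ _, max_le (hf.le_add_of_adj huv) (Nat.le_add_right _ _)⟩⟩
  · exact connected_induce_pathGraph (Nat.le_add_right _ _) (by linarith [hM v])

end IntervalLayout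

section Components

variable {G : SimpleGraph V} {R r : ℕ}

lemma edist_induce_supp (C : G.ConnectedComponent) (u v : C.supp) :
    (G.induce C.supp).edist u v = G.edist u v := by
  classical
  refine le_antisymm (le_iInf fun w => ?_) (edist_map_le (Embedding.induce C.supp).toHom u v)
  exact edist_induce_le_length w fun x hx =>
    (ConnectedComponent.sound (w.takeUntil x hx).reachable).symm.trans u.2

lemma radiusLE_induce_of_subset {S T : Set V} (hST : S ⊆ T)
    (h : radiusLE ((G.induce T).induce (Subtype.val ⁻¹' S)) r) : radiusLE (G.induce S) r := by
  rintro ⟨v₀, hv₀⟩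
  let φ : (G.induce T).induce (Subtype.val ⁻¹' S) →g G.induce S :=
    ⟨fun x => ⟨x, x.2⟩, fun hxy => hxy⟩
  obtain ⟨z, hz⟩ := h ⟨⟨v₀, hST hv₀⟩, hv₀⟩
  exact ⟨φ z, fun v => (edist_map_le φ z ⟨⟨v, hST v.2⟩, v.2⟩).trans (hz _)⟩

lemma mul_add_le_and_le_iff {K e a R j : ℕ} (h : a + R < K) :
    e * K + a ≤ j ∧ j ≤ e * K + a + R ↔ j / K = e ∧ a ≤ j % K ∧ j % K ≤ a + R := by
  have hdiv := Nat.div_add_mod' j K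
  constructor
  · rintro ⟨hle, hge⟩
    have he : j / K = e := Nat.div_eq_of_lt_le (by omega) (by rw [Nat.succ_mul]; omega)
    rw [he] at hdiv
    omega
  · rintro ⟨rfl, hle, hge⟩
    omega

lemma exists_isIntervalLayout_of_forall_component [Finite V]
    (h : ∀ C : G.ConnectedComponent, ∃ f, IsIntervalLayout (G.induce C.supp) R r f) :
    ∃ f, IsIntervalLayout G R r f := by
  choose f hf using h
  let F (v : V) : ℕ := f (G.connectedComponentMk v) ⟨v, rfl⟩
  have hF {C : G.ConnectedComponent} (x : C.supp) : F x = f C x := by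
    obtain ⟨x, rfl⟩ := x
    rfl
  obtain ⟨M, hM⟩ := (Set.finite_range F).bddAbove
  obtain ⟨m, ⟨e⟩⟩ := Finite.exists_equiv_fin G.ConnectedComponent
  let K := M + R + 1
  have hK (v : V) : F v + R < K := by
    have hv : F v ≤ M := hM ⟨v, rfl⟩
    omega
  let E (v : V) : ℕ := e (G.connectedComponentMk v)
  have hE {u v : V} : E u = E v ↔ G.connectedComponentMk u = G.connectedComponentMk v := by
    rw [← Fin.ext_iff, e.apply_eq_iff_eq]
  have hbag {C : G.ConnectedComponent} {j : ℕ} (x : C.supp) :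
      (x : V) ∈ intervalBag (fun v => E v * K + F v) R j ↔
        j / K = E x ∧ x ∈ intervalBag (f C) R (j % K) := by
    rw [intervalBag, intervalBag, Set.mem_ofPred_eq, Set.mem_ofPred_eq,
      mul_add_le_and_le_iff (hK x), hF]
  refine ⟨fun v => E v * K + F v, fun u v huv => ?_, fun j => ?_⟩
  · have hC : G.connectedComponentMk u = G.connectedComponentMk v :=
      ConnectedComponent.sound huv.reachable
    have hfuv : F u ≤ F v + R := by
      rw [hF ⟨u, hC⟩]
      exact (hf _).le_add_of_adj (v := ⟨v, rfl⟩) huv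
    rw [hE.2 hC]
    omega
  · rintro ⟨v₀, hv₀⟩
    have hj {v : V} (hv : v ∈ intervalBag (fun v => E v * K + F v) R j) : j / K = E v :=
      ((hbag (C := G.connectedComponentMk v) ⟨v, rfl⟩).1 hv).1
    let C := G.connectedComponentMk v₀
    have hpre : Subtype.val ⁻¹' intervalBag (fun v => E v * K + F v) R j =
        intervalBag (f C) R (j % K) := by
      ext x
      rw [Set.mem_preimage, hbag, and_iff_right ((hj hv₀).trans (hE.2 x.2.symm))]
    refine radiusLE_induce_of_subset (T := C.supp)
      (fun v hv => hE.1 ((hj hv).symm.trans (hj hv₀))) ?_ ⟨⟨v₀, hv₀⟩⟩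
    rw [hpre]
    exact (hf C).radiusLE_bag (j % K)

end Components

section PathWidth

variable {G : SimpleGraph V} {a b : V} {P : G.Walk a b} {π : V → ℕ} {ℓ m : ℕ}

lemma exists_walk_getVert_getVert (w : G.Walk a b) {s t : ℕ} (hs : s ≤ w.length)
    (ht : t ≤ w.length) : ∃ q : G.Walk (w.getVert s) (w.getVert t),
      q.length = (t - s) + (s - t) ∧
        ∀ x ∈ q.support, ∃ i, min s t ≤ i ∧ i ≤ max s t ∧ w.getVert i = x := by
  wlog hst : s ≤ t generalizing s t
  · obtain ⟨q, hq, hsupp⟩ := this ht hs (le_of_not_ge hst)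
    refine ⟨q.reverse, by rw [Walk.length_reverse, hq, add_comm], fun x hx => ?_⟩
    rw [min_comm, max_comm]
    exact hsupp x (by rwa [Walk.support_reverse, List.mem_reverse] at hx)
  obtain ⟨q, -, hq, hget⟩ := exists_isSubwalk_getVert_getVert w hst ht
  refine ⟨q, by omega, fun x hx => ?_⟩
  obtain ⟨i, rfl, hi⟩ := Walk.mem_support_iff_exists_getVert.1 hx
  exact ⟨s + i, by omega, by omega, (hget i (by omega)).symm⟩

lemma IsProjection.isIntervalLayout {d : ℕ} (hπ : IsProjection P π) (hG : G.Connected)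
    (hP : IsGeodesic P) (hdepth : ∀ v, depth P π v ≤ d) :
    IsIntervalLayout G (2 * d + 1) (2 * d + 1) π := by
  refine ⟨fun u v huv => ?_, fun j => ?_⟩
  · have hvu := hπ.apply_le_add hG hP v u
    rw [dist_comm, dist_eq_one_iff_adj.2 huv] at hvu
    have hu := hdepth u
    have hv := hdepth v
    omega
  rintro ⟨v₀, hv₀, hj₀⟩
  have hv₀P := hπ.le_length v₀
  obtain ⟨c, hc⟩ : ∃ c, c = min P.length (j - d) := ⟨_, rfl⟩
  have hcP : c ≤ P.length := by omega
  have hmem {t : ℕ} (ht : t ≤ P.length) (hle : t ≤ j) (hge : j ≤ t + (2 * d + 1)) :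
      P.getVert t ∈ intervalBag π (2 * d + 1) j := by
    rw [intervalBag, Set.mem_ofPred_eq, hπ.apply_getVert hG hP ht]
    exact ⟨hle, hge⟩
  refine ⟨⟨P.getVert c, hmem hcP (by omega) (by omega)⟩, ?_⟩
  rintro ⟨v, hvj, hjv⟩
  have hvP := hπ.le_length v
  obtain ⟨q, hq, hqsupp⟩ := exists_walk_getVert_getVert P hcP hvP
  obtain ⟨w, hw, hconst⟩ := hπ.exists_walk v
  have hwd : w.length ≤ d := hw.trans_le (hdepth v)
  have hsupp : ∀ x ∈ (q.append w.reverse).support, x ∈ intervalBag π (2 * d + 1) j := by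
    intro x hx
    rcases (Walk.mem_support_append_iff _ _).1 hx with hx | hx
    · obtain ⟨i, hmin, hmax, rfl⟩ := hqsupp x hx
      exact hmem (by omega) (by omega) (by omega)
    · rw [Walk.support_reverse, List.mem_reverse] at hx
      rw [intervalBag, Set.mem_ofPred_eq, hconst x hx]
      exact ⟨hvj, hjv⟩
  refine (edist_induce_le_length _ hsupp).trans (Nat.cast_le.2 ?_)
  rw [Walk.length_append, Walk.length_reverse]
  omega

lemma isIntervalLayout_zero {r : ℕ} (hdiam : ∀ u v, G.edist u v ≤ r) (R : ℕ) :
    IsIntervalLayout G R r fun _ => 0 := by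
  refine ⟨fun _ _ _ => Nat.zero_le _, fun j => ?_⟩
  rintro ⟨v₀, hv₀⟩
  have hbag : intervalBag (fun _ : V => 0) R j = Set.univ := Set.eq_univ_of_forall fun _ => hv₀
  rw [hbag]
  exact ⟨⟨v₀, trivial⟩, fun v =>
    (edist_map_le (induceUnivIso G).symm.toHom v₀ v).trans (hdiam v₀ v)⟩

lemma exists_isIntervalLayout_of_connected [Finite V] (hG : G.Connected) (hm : 3 * m ≤ 4 * ℓ + 3)
    (htri : ¬ ContainsQuasiGeodesicSubdivGE G m triangleGraph 1)
    (hclaw : ¬ ContainsQuasiGeodesicSubdivGE G ℓ clawGraph 3) :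
    ∃ f, IsIntervalLayout G (6 * ℓ + 1) (6 * ℓ + 2) f := by
  have := hG.nonempty
  have hfin : G.ediam ≠ ⊤ := connected_iff_ediam_ne_top.1 hG
  obtain ⟨a, b, hab⟩ := G.exists_dist_eq_diam
  obtain ⟨P, hP⟩ := hG.exists_walk_length_eq_dist a b
  have hdiam (x y : V) : G.dist x y ≤ P.length := by
    rw [hP, hab]
    exact dist_le_diam hfin
  rcases le_or_gt P.length (6 * ℓ + 2) with hshort | hlong
  · refine ⟨_, isIntervalLayout_zero (fun u v => ?_) _⟩
    rw [← (hG u v).coe_dist_eq_edist]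
    exact Nat.cast_le.2 ((hdiam u v).trans hshort)
  · obtain ⟨π, hπ⟩ := exists_isProjection hG P
    have hlayout := hπ.isIntervalLayout hG hP (hπ.depth_le hG hP hdiam hlong hm htri hclaw)
    rw [← mul_assoc] at hlayout
    exact ⟨π, hlayout.mono_radius (Nat.le_succ _)⟩

theorem radial_path_width_upper_bound_general [Finite V] (hm : 3 * m ≤ 4 * ℓ + 3)
    (htri : ¬ ContainsQuasiGeodesicSubdivGE G m triangleGraph 1)
    (hclaw : ¬ ContainsQuasiGeodesicSubdivGE G ℓ clawGraph 3) :
    ∃ (n : ℕ) (Hg : SimpleGraph (Fin n)) (B : Fin n → Set V),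
      IsUnionOfPaths Hg ∧ IsGraphDecomp G Hg B ∧
      ∀ h, radiusLE (G.induce (B h)) (6 * ℓ + 2) := by
  obtain ⟨f, hf⟩ := exists_isIntervalLayout_of_forall_component fun C =>
    exists_isIntervalLayout_of_connected C.connected_toSimpleGraph hm
      (fun h => htri (h.map (Embedding.induce C.supp) fun u v => (edist_induce_supp C u v).symm))
      (fun h => hclaw (h.map (Embedding.induce C.supp) fun u v => (edist_induce_supp C u v).symm))
  exact hf.exists_isGraphDecomp

end PathWidth

/-- Let `k : ℕ`. If a graph `G` contains no `(≥ 4k+1)`-subdivision of the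
triangle `K³` as a geodesic subgraph and no `(≥ 3k)`-subdivision of the claw `K_{1,3}` as a
`3`-quasi-geodesic subgraph, then `G` has radial path-width at most `18k + 2`. -/
theorem radial_path_width_upper_bound
    {V : Type*} [Fintype V] (k : ℕ) (G : SimpleGraph V)
    (hK3 : ¬ ContainsQuasiGeodesicSubdivGE G (4 * k + 1) triangleGraph 1)
    (hclaw : ¬ ContainsQuasiGeodesicSubdivGE G (3 * k) clawGraph 3) :
    ∃ (n : ℕ) (Hg : SimpleGraph (Fin n)) (B : Fin n → Set V),
      IsUnionOfPaths Hg ∧ IsGraphDecomp G Hg B ∧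
      ∀ h, radiusLE (G.induce (B h)) (18 * k + 2) := by
  have hgeneral := radial_path_width_upper_bound_general (by omega) hK3 hclaw
  rwa [← mul_assoc] at hgeneral

end RadialPaper
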